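/- Chaitin's theorem on Ω: For a universal prefix-free machine U, the halting probability Ω_U is a left-c.e. real, the binary expansion of Ω_U is a Martin-Löf random sequence, and Ω_U is Turing equivalent to the halting problem ∅'. -/

import Mathlib

open scoped ENNReal NNReal Classical

namespace AR

/-- Elements of Cantor space `2^ω`: infinite binary sequences. -/
abbrev Seq := ℕ → Bool

/-- Finite binary strings `2^{<ω}`. -/
abbrev Str := List Bool

/-- The first `n` bits of a sequence `A`, as a finite string (`A↾n`). -/
def pre (A : Seq) (n : ℕ) : Str := List.ofFn fun i : Fin n => A i

/-- The basic clopen cylinder `[σ]` of all sequences extending `σ`. -/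
def cyl (σ : Str) : Set Seq := {A | pre A σ.length = σ}

/-- A measure on Cantor space is *fair-coin* if every cylinder `[σ]` has measure
`2^{-|σ|}`; this uniquely characterizes the usual product measure `μ` on `2^ω`. -/
def FairCoin (μ : MeasureTheory.Measure Seq) : Prop :=
  ∀ σ : Str, μ (cyl σ) = (2 : ℝ≥0∞)⁻¹ ^ σ.length

/-- A machine is a partial computable function `2^{<ω} ⇀ 2^{<ω}`. -/
def IsMachine (M : Str →. Str) : Prop := Partrec M

/-- Kolmogorov complexity of `τ` relative to the machine `M`:
`C_M(τ) = min{|σ| : M(σ)↓ = τ}`, with value `∞` if no such `σ` exists. -/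
noncomputable def Cplx (M : Str →. Str) (τ : Str) : ℕ∞ :=
  sInf ((fun σ : Str => (σ.length : ℕ∞)) '' {σ | τ ∈ M σ})

/-- A universal machine: a machine simulating every machine up to an additive
constant.  `Cplx U` for universal `U` is plain Kolmogorov complexity `C`. -/
def UniversalMachine (U : Str →. Str) : Prop :=
  IsMachine U ∧ ∀ M : Str →. Str, IsMachine M → ∃ c : ℕ, ∀ τ, Cplx U τ ≤ Cplx M τ + c

/-- A set of strings is prefix-free if none of its elements is a proper initial
segment of another. -/
def PrefixFree (S : Set Str) : Prop :=
  ∀ σ ∈ S, ∀ τ ∈ S, σ <+: τ → σ = τ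

/-- A prefix-free machine: a machine whose domain is prefix-free. -/
def PrefixFreeMachine (M : Str →. Str) : Prop :=
  IsMachine M ∧ PrefixFree {σ | (M σ).Dom}

/-- A universal prefix-free machine.  `Cplx U` for such `U` is prefix-free
Kolmogorov complexity `K`. -/
def UniversalPFMachine (U : Str →. Str) : Prop :=
  PrefixFreeMachine U ∧
    ∀ M : Str →. Str, PrefixFreeMachine M → ∃ c : ℕ, ∀ τ, Cplx U τ ≤ Cplx M τ + c

/-- A c.e. (recursively enumerable) predicate. -/
def CEPred {α} [Primcodable α] (p : α → Prop) : Prop :=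
  Partrec fun a => Part.assert (p a) fun _ => Part.some ()

/-- A Martin-Löf test: a sequence of uniformly Σ⁰₁ classes `U i`, given by a single
c.e. set `W` of pairs, with `μ (U i) ≤ 2^{-i}`. -/
def MLTest (μ : MeasureTheory.Measure Seq) (U : ℕ → Set Seq) : Prop :=
  ∃ W : Set (ℕ × Str), CEPred (· ∈ W) ∧
    (∀ i, U i = ⋃ σ ∈ {σ : Str | (i, σ) ∈ W}, cyl σ) ∧
    ∀ i, μ (U i) ≤ (2 : ℝ≥0∞)⁻¹ ^ i

/-- `A` is Martin-Löf random if it passes every Martin-Löf test. -/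
def MLRandom (μ : MeasureTheory.Measure Seq) (A : Seq) : Prop :=
  ∀ U : ℕ → Set Seq, MLTest μ U → A ∉ ⋂ i, U i

/-- Oracle partial recursion: `RecIn O f` means that the partial function
`f : ℕ ⇀ ℕ` is partial recursive relative to the oracle `O`
(Mathlib's `Nat.RecursiveIn`). -/
inductive RecIn (O : ℕ →. ℕ) : (ℕ →. ℕ) → Prop
  | zero : RecIn O (pure 0)
  | succ : RecIn O Nat.succ
  | left : RecIn O ↑fun n : ℕ => n.unpair.1
  | right : RecIn O ↑fun n : ℕ => n.unpair.2
  | oracle : RecIn O O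
  | pair {f g} : RecIn O f → RecIn O g → RecIn O fun n => Nat.pair <$> f n <*> g n
  | comp {f g} : RecIn O f → RecIn O g → RecIn O fun n => g n >>= f
  | prec {f g} : RecIn O f → RecIn O g → RecIn O (Nat.unpaired fun a n =>
      n.rec (f a) fun y IH => do let i ← IH; g (Nat.pair a (Nat.pair y i)))
  | rfind {f} : RecIn O f →
      RecIn O fun a => Nat.rfind fun n => (fun m => m = 0) <$> f (Nat.pair a n)

/-- The characteristic-function oracle associated to a sequence `A ∈ 2^ω`. -/
def oracleOf (A : Seq) : ℕ →. ℕ := fun n => Part.some (cond (A n) 1 0)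

/-- The characteristic-function oracle associated to a set of naturals. -/
noncomputable def oracleOfSet (S : Set ℕ) : ℕ →. ℕ :=
  fun n => Part.some (if n ∈ S then 1 else 0)

/-- Relative partial computability for partial functions between coded types. -/
def PartrecIn (O : ℕ →. ℕ) {α σ} [Primcodable α] [Primcodable σ] (f : α →. σ) : Prop :=
  RecIn O fun n =>
    Part.bind (Encodable.decode (α := α) n) fun a => (f a).map Encodable.encode

/-- A predicate is c.e. relative to the oracle `O`. -/
def CEPredIn (O : ℕ →. ℕ) {α} [Primcodable α] (p : α → Prop) : Prop :=
  PartrecIn O fun a => Part.assert (p a) fun _ => Part.some ()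

/-- Turing reducibility between oracles: `f` is recursive in `g`. -/
def TuringLE (f g : ℕ →. ℕ) : Prop := RecIn g f

/-- Turing reducibility `B ≤_T A` between sequences. -/
def SeqTuringLE (B A : Seq) : Prop := TuringLE (oracleOf B) (oracleOf A)

/-- The `e`-th partial computable function `φ_e`, via Mathlib's standard
enumeration of codes for the partial recursive functions. -/
def phi (e : ℕ) : ℕ →. ℕ := (Denumerable.ofNat Nat.Partrec.Code e).eval

/-- The halting problem `∅' = {e : φ_e(e)↓}`. -/
def haltingSet : Set ℕ := {e | (phi e e).Dom}

/-- A Martin-Löf test relative to the oracle `O`. -/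
def MLTestIn (O : ℕ →. ℕ) (μ : MeasureTheory.Measure Seq) (U : ℕ → Set Seq) : Prop :=
  ∃ W : Set (ℕ × Str), CEPredIn O (· ∈ W) ∧
    (∀ i, U i = ⋃ σ ∈ {σ : Str | (i, σ) ∈ W}, cyl σ) ∧
    ∀ i, μ (U i) ≤ (2 : ℝ≥0∞)⁻¹ ^ i

/-- Martin-Löf randomness relative to the oracle `O`. -/
def MLRandomIn (O : ℕ →. ℕ) (μ : MeasureTheory.Measure Seq) (A : Seq) : Prop :=
  ∀ U : ℕ → Set Seq, MLTestIn O μ U → A ∉ ⋂ i, U i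

/-- The halting probability `Ω_U = Σ_{σ ∈ dom U} 2^{-|σ|}` of a machine `U`. -/
noncomputable def Omega (U : Str →. Str) : ℝ :=
  ∑' σ : Str, if (U σ).Dom then (2 : ℝ)⁻¹ ^ σ.length else 0

/-- The real number `0.A` in `[0,1]` whose binary expansion is `A ∈ 2^ω`. -/
noncomputable def binExp (A : Seq) : ℝ :=
  ∑' n : ℕ, cond (A n) ((2 : ℝ)⁻¹ ^ (n + 1)) 0

/-- A real is left-c.e. if it is the limit of a computable strictly increasing
sequence of rationals. -/
def LeftCE (x : ℝ) : Prop :=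
  ∃ q : ℕ → ℚ, Computable q ∧ StrictMono q ∧
    Filter.Tendsto (fun n => (q n : ℝ)) Filter.atTop (nhds x)

/-!
The halting probability is the limit of an increasing sequence of dyadic rationals: at stage `s` one
sums the weights `2 ^ (-|σ|)` of the inputs `σ` enumerated so far. Whether a given dyadic rational
lies below `Ω` is therefore a question to the halting problem, which finds the bits of `Ω` one after
the other. Conversely, the first `n` bits of `Ω` yield a stage after which no input shorter than `n`
halts any more, since its weight would push the approximation past `Ω`. This stage bounds every
output on an input shorter than `n`, with two consequences.

* A number `e` that enters a c.e. set at stage `k` gives `0 ^ k` complexity at most `e + O(1)`, so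
  sufficiently many bits of `Ω` bound the stage at which `e` can enter: `Ω` computes the halting
  problem.
* From a description of `Ω↾n` one obtains a string which has no description shorter than `n`, hence
  `K(Ω↾n) ≥ n - O(1)`. Such a sequence is random (Levin–Schnorr): one covers the component `2 i + 1`
  of a Martin-Löf test by a prefix-free set of strings `ν` and requests descriptions of length
  `|ν| - i`. The total weight is at most `1`, so by the Kraft–Chaitin theorem every sequence in the
  intersection has initial segments compressible by any given amount.
-/

section Computability

open Encodable

theorem primrec_pow : Primrec₂ ((· ^ ·) : ℕ → ℕ → ℕ) :=
  Primrec₂.unpaired'.1 Nat.Primrec.pow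

theorem primrec_two_pow : Primrec fun n : ℕ => 2 ^ n :=
  primrec_pow.comp (.const 2) .id

theorem primrec_dvd : PrimrecRel ((· ∣ ·) : ℕ → ℕ → Prop) :=
  (Primrec.eq.comp (Primrec.nat_mod.comp .snd .fst) (.const 0)).of_eq
    fun p => (Nat.dvd_iff_mod_eq_zero (m := p.1) (n := p.2)).symm

theorem findGreatest_dvd_and_dvd (a b : ℕ) :
    Nat.findGreatest (fun d => d ∣ a ∧ d ∣ b) (a + b) = a.gcd b := by
  rcases Nat.eq_zero_or_pos (a.gcd b) with h | h
  · obtain ⟨rfl, rfl⟩ := Nat.gcd_eq_zero_iff.1 h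
    rfl
  rw [Nat.findGreatest_eq_iff]
  refine ⟨?_, fun _ => ⟨Nat.gcd_dvd_left a b, Nat.gcd_dvd_right a b⟩, fun n hn _ hd => ?_⟩
  · rcases Nat.eq_zero_or_pos a with rfl | ha
    · simp
    · exact (Nat.gcd_le_left b ha).trans (Nat.le_add_right a b)
  · exact (Nat.le_of_dvd h (Nat.dvd_gcd hd.1 hd.2)).not_gt hn

theorem primrec_gcd : Primrec₂ Nat.gcd := by
  have hp : PrimrecRel fun (p : ℕ × ℕ) (d : ℕ) => d ∣ p.1 ∧ d ∣ p.2 :=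
    PrimrecPred.and (primrec_dvd.comp .snd (Primrec.fst.comp .fst))
      (primrec_dvd.comp .snd (Primrec.snd.comp .fst))
  exact (Primrec.nat_findGreatest (Primrec.nat_add.comp .fst .snd) hp).of_eq fun p => by
    convert findGreatest_dvd_and_dvd p.1 p.2

theorem primrec_sum_range {α : Type*} [Primcodable α] {f : α → ℕ → ℕ} {g : α → ℕ}
    (hf : Primrec₂ f) (hg : Primrec g) :
    Primrec fun a => ∑ i ∈ Finset.range (g a), f a i := by
  refine (Primrec.nat_rec' (h := fun a (p : ℕ × ℕ) => p.2 + f a p.1) hg (.const 0)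
    (Primrec.nat_add.comp (Primrec.snd.comp .snd)
      (hf.comp .fst (Primrec.fst.comp .snd)))).of_eq fun a => ?_
  induction g a with
  | zero => rfl
  | succ n ih => rw [Finset.sum_range_succ, ← ih]

theorem primrec_replicate {α : Type*} [Primcodable α] (x : α) :
    Primrec fun n : ℕ => List.replicate n x :=
  (Primrec.list_map Primrec.list_range (Primrec.const x).to₂).of_eq fun n => by simp

theorem primrec_count {p : ℕ → Prop} [DecidablePred p] (hp : PrimrecPred p) :
    Primrec (Nat.count p) :=
  (Primrec.list_length.comp ((Primrec.listFilter hp).comp Primrec.list_range)).of_eq fun n => by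
    rw [Nat.count, List.countP_eq_length_filter]

theorem primrec_natAbs : Primrec Int.natAbs := by
  refine (Primrec.nat_div.comp (Primrec.succ.comp .encode) (.const 2)).of_eq fun z => ?_
  cases z with
  | ofNat n =>
    change (2 * n + 1) / 2 = n
    omega
  | negSucc n =>
    change (2 * n + 1 + 1) / 2 = n + 1
    omega

theorem primrec_natCast_sub : Primrec₂ fun m n : ℕ => (m : ℤ) - n := by
  refine Primrec.encode_iff.1 ((Primrec.ite (Primrec.nat_lt.comp .fst .snd)
    (Primrec.nat_double_succ.comp (Primrec.pred.comp (Primrec.nat_sub.comp .snd .fst)))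
    (Primrec.nat_double.comp (Primrec.nat_sub.comp .fst .snd))).of_eq fun ⟨m, n⟩ => ?_)
  dsimp only
  split_ifs with h
  · obtain ⟨k, hk⟩ := Nat.exists_eq_add_of_lt h
    rw [show (m : ℤ) - n = Int.negSucc k by omega, show n - m = k + 1 by omega]
    rfl
  · rw [← Int.ofNat_sub (not_lt.1 h)]
    rfl

theorem primrec_ediv_natCast : Primrec₂ fun (z : ℤ) (n : ℕ) => z / (n : ℤ) := by
  have hz : Primrec fun p : ℤ × ℕ => encode p.1 := Primrec.encode.comp .fst
  refine Primrec.encode_iff.1 ((Primrec.ite (Primrec.eq.comp .snd (.const 0)) (.const 0)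
    (Primrec.nat_add.comp (Primrec.nat_double.comp (Primrec.nat_div.comp
      (Primrec.nat_div.comp hz (.const 2)) .snd))
      (Primrec.nat_mod.comp hz (.const 2)))).of_eq fun ⟨z, n⟩ => ?_)
  rcases n with - | n
  · simp
    rfl
  rw [if_neg n.succ_ne_zero]
  cases z with
  | ofNat m =>
    change 2 * (2 * m / 2 / (n + 1)) + 2 * m % 2 = 2 * (m / (n + 1))
    rw [Nat.mul_div_cancel_left m two_pos, Nat.mul_mod_right, add_zero]
  | negSucc m =>
    change 2 * ((2 * m + 1) / 2 / (n + 1)) + (2 * m + 1) % 2 = 2 * (m / (n + 1)) + 1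
    rw [show (2 * m + 1) / 2 = m by omega, show (2 * m + 1) % 2 = 1 by omega]

theorem encode_ofEncodableOfInfinite {α : Type*} [Encodable α] [Infinite α] (a : α) :
    @encode α (Denumerable.ofEncodableOfInfinite α).toEncodable a =
      Nat.count (· ∈ Set.range (encode : α → ℕ)) (encode a) := by
  let := decidableRangeEncode α
  trans (List.range (encode a)).countP (· ∈ Set.range (encode : α → ℕ))
  · rfl
  · rw [Nat.count]
    congr!

theorem mem_range_encode_rat {y : ℕ} : y ∈ Set.range (@encode ℚ Rat.instEncodable) ↔
    y.unpair.2 ≠ 0 ∧ (Denumerable.ofNat ℤ y.unpair.1).natAbs.gcd y.unpair.2 = 1 := by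
  constructor
  · rintro ⟨q, rfl⟩
    change (Nat.unpair (Nat.pair (encode q.num) q.den)).2 ≠ 0 ∧
      (Denumerable.ofNat ℤ (Nat.unpair (Nat.pair (encode q.num) q.den)).1).natAbs.gcd
        (Nat.unpair (Nat.pair (encode q.num) q.den)).2 = 1
    rw [Nat.unpair_pair, Denumerable.ofNat_encode]
    exact ⟨q.den_nz, q.reduced⟩
  · rintro ⟨hden, hgcd⟩
    refine ⟨⟨Denumerable.ofNat ℤ y.unpair.1, y.unpair.2, hden, hgcd⟩, ?_⟩
    change Nat.pair (encode (Denumerable.ofNat ℤ y.unpair.1)) y.unpair.2 = y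
    rw [Denumerable.encode_ofNat, Nat.pair_unpair]

-- The library numbers `ℚ` by the rank of the pair `(num, den)` among the pairs in lowest terms.
theorem primrec_rat_of_num_den {α : Type*} [Primcodable α] {f : α → ℚ}
    (hnum : Primrec fun a => (f a).num) (hden : Primrec fun a => (f a).den) : Primrec f := by
  have hp : PrimrecPred fun y : ℕ => y ∈ Set.range (@encode ℚ Rat.instEncodable) := by
    refine PrimrecPred.of_eq ?_ fun y => mem_range_encode_rat.symm
    have hsnd : Primrec fun y : ℕ => y.unpair.2 := Primrec.snd.comp .unpair
    exact (Primrec.eq.comp hsnd (.const 0)).not.and (Primrec.eq.comp (primrec_gcd.comp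
      (primrec_natAbs.comp ((Primrec.ofNat ℤ).comp (Primrec.fst.comp .unpair))) hsnd) (.const 1))
  exact Primrec.encode_iff.1 (((primrec_count hp).comp (Primrec₂.natPair.comp
    (Primrec.encode.comp hnum) hden)).of_eq fun a => (encode_ofEncodableOfInfinite (f a)).symm)

theorem primrec_mkRat : Primrec₂ mkRat := by
  have hgcd : Primrec fun p : ℤ × ℕ => p.2.gcd p.1.natAbs :=
    primrec_gcd.comp .snd (primrec_natAbs.comp .fst)
  have hzero : PrimrecPred fun p : ℤ × ℕ => p.2 = 0 := Primrec.eq.comp .snd (.const 0)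
  refine primrec_rat_of_num_den ?_ ?_
  · exact (Primrec.ite hzero (.const 0) (primrec_ediv_natCast.comp .fst hgcd)).of_eq
      fun p => (Rat.num_mkRat p.1 p.2).symm
  · exact (Primrec.ite hzero (.const 1) (Primrec.nat_div.comp .snd hgcd)).of_eq
      fun p => (Rat.den_mkRat p.1 p.2).symm

end Computability

section Enumeration

open Encodable
open Nat.Partrec (Code)

variable {α β : Type*} [Primcodable α] [Primcodable β] {p : α → Prop}

theorem CEPred.comp (hp : CEPred p) {f : β → α} (hf : Computable f) : CEPred fun b => p (f b) :=
  Partrec.comp hp hf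

theorem CEPred.exists_nat {p : α → ℕ → Prop} (hp : PrimrecRel p) : CEPred fun a => ∃ s, p a s := by
  have hfind : Partrec fun a => Nat.rfind fun s => Part.some (decide (p a s)) :=
    Partrec.rfind (PrimrecPred.decide hp).to_comp.partrec
  exact (Partrec.dom_re hfind).of_eq fun a => Nat.rfind_dom'.trans (by simp)

theorem CEPred.mem_graph {f : α →. β} (hf : Partrec f) : CEPred fun q : α × β => q.2 ∈ f q.1 := by
  have heq : Partrec₂ fun (q : α × β) (b : β) => Part.assert (b = q.2) fun _ => Part.some () :=
    ComputablePred.to_re (Primrec.eq.comp .snd (Primrec.snd.comp .fst)).computablePred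
  refine (Partrec.dom_re ((hf.comp Computable.fst).bind heq)).of_eq fun q => ?_
  simp [Part.dom_iff_mem]

theorem CEPred.exists_code (hp : CEPred p) : ∃ c : Code, ∀ a, (c.eval (encode a)).Dom ↔ p a := by
  obtain ⟨c, hc⟩ := Code.exists_code.1 hp
  refine ⟨c, fun a => ?_⟩
  rw [hc]
  simp [Part.assert]

theorem CEPred.exists_mem_haltingSet_iff (hp : CEPred p) :
    ∃ f : α → ℕ, Computable f ∧ ∀ a, f a ∈ haltingSet ↔ p a := by
  obtain ⟨c, hc⟩ := hp.exists_code
  refine ⟨fun a => encode ((c.comp .left).curry (encode a)), ?_, fun a => ?_⟩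
  · exact Computable.encode.comp (Code.primrec₂_curry.to_comp.comp (.const _) .encode)
  · change (phi _ _).Dom ↔ _
    rw [← hc, phi, Denumerable.ofNat_encode, Code.eval_curry]
    change (Part.bind (Part.some (Nat.unpair (Nat.pair _ _)).1) c.eval).Dom ↔ _
    rw [Nat.unpair_pair]
    exact iff_of_eq (congrArg Part.Dom (Part.bind_some _ c.eval))

/-- `w` enumerates the predicate `p` primitive recursively and without repetition, with pauses
`none`. An element appears no earlier than its code, so that stage `k` bounds the size of every
object enumerated by then. -/
structure IsEnumeration (w : ℕ → Option α) (p : α → Prop) : Prop where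
  primrec : Primrec w
  exists_eq_some_iff : ∀ a, (∃ k, w k = some a) ↔ p a
  index_unique : ∀ ⦃a j k⦄, w j = some a → w k = some a → j = k
  encode_le : ∀ ⦃a k⦄, w k = some a → encode a ≤ k

/-- The computation of `c` on input `n` halts within `t + 1` steps and not within `t` steps. -/
def HaltsAt (c : Code) (n t : ℕ) : Prop :=
  (c.evaln (t + 1) n).isSome ∧ c.evaln t n = none

theorem primrec_haltsAt (c : Code) : PrimrecRel (HaltsAt c) := by
  have hevaln : Primrec₂ fun t n => c.evaln t n :=
    Code.primrec_evaln.comp (.pair (.pair .fst (.const c)) .snd)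
  exact (Primrec.eq.comp (Primrec.option_isSome.comp
    (hevaln.comp (Primrec.succ.comp .snd) .fst)) (.const true)).and
    (Primrec.eq.comp (hevaln.comp .snd .fst) (.const none))

theorem HaltsAt.unique {c : Code} {n s t : ℕ} (hs : HaltsAt c n s) (ht : HaltsAt c n t) :
    s = t := by
  by_contra hne
  wlog hlt : s < t generalizing s t
  · exact this ht hs (Ne.symm hne) (by omega)
  obtain ⟨x, hx⟩ := Option.isSome_iff_exists.1 hs.1
  exact Option.some_ne_none x ((Code.evaln_mono hlt hx).symm.trans ht.2)

theorem exists_haltsAt_iff {c : Code} {n : ℕ} : (∃ t, HaltsAt c n t) ↔ (c.eval n).Dom := by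
  rw [Part.dom_iff_mem]
  constructor
  · rintro ⟨t, ht, -⟩
    obtain ⟨x, hx⟩ := Option.isSome_iff_exists.1 ht
    exact ⟨x, Code.evaln_sound hx⟩
  · rintro ⟨x, hx⟩
    have hex : ∃ t, (c.evaln t n).isSome :=
      (Code.evaln_complete.1 hx).imp fun t ht => Option.isSome_iff_exists.2 ⟨x, ht⟩
    obtain ⟨t, ht⟩ : ∃ t, Nat.find hex = t + 1 :=
      Nat.exists_eq_succ_of_ne_zero ((Nat.find_pos hex).2 (by simp [Code.evaln])).ne'
    exact ⟨t, ht ▸ Nat.find_spec hex, by simpa using Nat.find_min hex (ht.symm ▸ t.lt_succ_self)⟩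

theorem CEPred.exists_isEnumeration (hp : CEPred p) : ∃ w, IsEnumeration w p := by
  obtain ⟨c, hc⟩ := hp.exists_code
  let w : ℕ → Option α := fun k =>
    if HaltsAt c k.unpair.1 k.unpair.2 then decode₂ α k.unpair.1 else none
  have hw : ∀ {k a}, w k = some a ↔ HaltsAt c (encode a) k.unpair.2 ∧ encode a = k.unpair.1 := by
    intro k a
    rw [Option.ite_none_right_eq_some, decode₂_eq_some]
    exact and_congr_left fun h => by rw [h]
  have hfst : Primrec fun k : ℕ => k.unpair.1 := Primrec.fst.comp .unpair
  refine ⟨w, ?_, fun a => ?_, fun a j k hj hk => ?_, fun a k hk => ?_⟩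
  · exact Primrec.ite ((primrec_haltsAt c).comp hfst (Primrec.snd.comp .unpair))
      (Primrec.decode₂.comp hfst) (.const none)
  · rw [← hc, ← exists_haltsAt_iff]
    constructor
    · exact fun ⟨k, hk⟩ => ⟨_, (hw.1 hk).1⟩
    · exact fun ⟨t, ht⟩ => ⟨Nat.pair (encode a) t, hw.2 (by simpa using ht)⟩
  · obtain ⟨hj, hj'⟩ := hw.1 hj
    obtain ⟨hk, hk'⟩ := hw.1 hk
    exact Nat.pairEquiv.symm.injective (Prod.ext (hj'.symm.trans hk') (hj.unique hk))
  · exact (hw.1 hk).2.trans_le k.unpair_left_le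

namespace IsEnumeration

variable {w : ℕ → Option α}

theorem holds (hw : IsEnumeration w p) {k : ℕ} {a : α} (h : w k = some a) : p a :=
  (hw.exists_eq_some_iff a).1 ⟨k, h⟩

theorem hasSum_iff {M : Type*} [AddCommMonoid M] [TopologicalSpace M] (hw : IsEnumeration w p)
    {g : α → M} {m : M} :
    HasSum (fun k => (w k).elim 0 g) m ↔ HasSum (fun a : {a // p a} => g a) m := by
  choose index hindex using fun a : {a // p a} => (hw.exists_eq_some_iff a).2 a.2
  have hinj : Function.Injective index := fun a b h =>
    Subtype.ext (Option.some_injective _ ((hindex a).symm.trans (h ▸ hindex b)))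
  rw [← hinj.hasSum_iff]
  · simp only [Function.comp_def, hindex, Option.elim_some]
  · intro k hk
    cases h : w k with
    | none => rfl
    | some a => exact absurd ⟨⟨a, hw.holds h⟩, hw.index_unique (hindex _) h⟩ hk

theorem tsum_eq {M : Type*} [AddCommMonoid M] [TopologicalSpace M] [T2Space M]
    (hw : IsEnumeration w p) (g : α → M) :
    ∑' k, (w k).elim 0 g = ∑' a : {a // p a}, g a :=
  tsum_eq_tsum_of_hasSum_iff_hasSum hw.hasSum_iff

end IsEnumeration

end Enumeration

section Strings

/-- The natural number written by a binary string, most significant bit first. -/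
def strVal (σ : Str) : ℕ := σ.foldl (fun a b => 2 * a + b.toNat) 0

@[simp]
theorem strVal_nil : strVal [] = 0 := rfl

theorem strVal_concat (σ : Str) (b : Bool) : strVal (σ ++ [b]) = 2 * strVal σ + b.toNat := by
  simp [strVal]

theorem strVal_append (σ τ : Str) :
    strVal (σ ++ τ) = strVal σ * 2 ^ τ.length + strVal τ := by
  induction τ using List.reverseRecOn with
  | nil => simp
  | append_singleton τ b ih =>
    rw [← List.append_assoc, strVal_concat, strVal_concat, ih, List.length_append,
      List.length_singleton, pow_succ]
    ring

theorem strVal_lt (σ : Str) : strVal σ < 2 ^ σ.length := by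
  induction σ using List.reverseRecOn with
  | nil => simp
  | append_singleton σ b ih =>
    rw [strVal_concat, List.length_append, List.length_singleton, pow_succ]
    have := b.toNat_le
    omega

theorem exists_strVal_eq (n m : ℕ) (h : m < 2 ^ n) : ∃ σ : Str, σ.length = n ∧ strVal σ = m := by
  induction n generalizing m with
  | zero => exact ⟨[], rfl, (Nat.lt_one_iff.1 h).symm⟩
  | succ n ih =>
    obtain ⟨σ, hl, hv⟩ := ih (m / 2) (by rw [pow_succ] at h; omega)
    refine ⟨σ ++ [decide (m % 2 = 1)], by simp [hl], ?_⟩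
    rw [strVal_concat, hv]
    rcases Nat.mod_two_eq_zero_or_one m with h | h <;> simp [h] <;> omega

theorem primrec_strVal : Primrec strVal :=
  Primrec.list_foldl .id (.const 0)
    (Primrec.nat_add.comp (Primrec.nat_double.comp (Primrec.fst.comp .snd))
      ((Primrec.dom_bool Bool.toNat).comp (Primrec.snd.comp .snd))).to₂

theorem strVal_div_le_of_isPrefix {σ τ : Str} (h : σ <+: τ) :
    (strVal σ : ℝ) / 2 ^ σ.length ≤ strVal τ / 2 ^ τ.length := by
  obtain ⟨ρ, rfl⟩ := h
  rw [strVal_append, List.length_append, pow_add, div_le_div_iff₀ (by positivity) (by positivity)]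
  push_cast
  nlinarith [show (0 : ℝ) ≤ strVal ρ * 2 ^ σ.length by positivity]

theorem succ_strVal_div_le_of_isPrefix {σ τ : Str} (h : σ <+: τ) :
    ((strVal τ + 1 : ℕ) : ℝ) / 2 ^ τ.length ≤ (strVal σ + 1 : ℕ) / 2 ^ σ.length := by
  obtain ⟨ρ, rfl⟩ := h
  have hρ : strVal (σ ++ ρ) + 1 ≤ (strVal σ + 1) * 2 ^ ρ.length := by
    rw [strVal_append]
    linarith [strVal_lt ρ]
  rw [List.length_append, pow_add, div_le_div_iff₀ (by positivity) (by positivity)]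
  have hρ' : ((strVal (σ ++ ρ) + 1 : ℕ) : ℝ) ≤ (strVal σ + 1 : ℕ) * 2 ^ ρ.length := by
    exact_mod_cast hρ
  calc _ ≤ ((strVal σ + 1 : ℕ) * 2 ^ ρ.length : ℝ) * 2 ^ σ.length := by gcongr
    _ = _ := by ring

@[simp]
theorem length_pre (A : Seq) (n : ℕ) : (pre A n).length = n := List.length_ofFn

theorem pre_succ (A : Seq) (n : ℕ) : pre A (n + 1) = pre A n ++ [A n] := by
  rw [pre, List.ofFn_succ', List.concat_eq_append]
  rfl

theorem pre_isPrefix (A : Seq) {m n : ℕ} (h : m ≤ n) : pre A m <+: pre A n := by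
  induction n, h using Nat.le_induction with
  | base => exact List.prefix_refl _
  | succ n _ ih => exact pre_succ A n ▸ ih.trans (List.prefix_append _ _)

theorem strVal_pre_succ (A : Seq) (n : ℕ) :
    strVal (pre A (n + 1)) = 2 * strVal (pre A n) + (A n).toNat := by
  rw [pre_succ, strVal_concat]

theorem binExp_eq_ofDigits (A : Seq) :
    binExp A = Real.ofDigits fun n => cond (A n) (1 : Fin 2) 0 :=
  tsum_congr fun n => by cases h : A n <;> simp [Real.ofDigitsTerm, h]

theorem sum_range_ofDigitsTerm (A : Seq) (n : ℕ) :
    ∑ i ∈ Finset.range n, Real.ofDigitsTerm (fun n => cond (A n) (1 : Fin 2) 0) i =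
      strVal (pre A n) / 2 ^ n := by
  induction n with
  | zero => simp [pre]
  | succ n ih =>
    rw [Finset.sum_range_succ, ih, strVal_pre_succ, Real.ofDigitsTerm]
    cases A n <;> simp [pow_succ] <;> field_simp

theorem binExp_eq_strVal_pre_add (A : Seq) (n : ℕ) :
    binExp A = (strVal (pre A n) + binExp fun i => A (i + n)) / 2 ^ n := by
  rw [binExp_eq_ofDigits, Real.ofDigits_eq_sum_add_ofDigits _ n, sum_range_ofDigitsTerm,
    binExp_eq_ofDigits]
  push_cast
  ring

theorem strVal_pre_le_binExp (A : Seq) (n : ℕ) : (strVal (pre A n) : ℝ) / 2 ^ n ≤ binExp A := by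
  rw [binExp_eq_strVal_pre_add A n, binExp_eq_ofDigits]
  gcongr
  exact le_add_of_nonneg_right (Real.ofDigits_nonneg _)

theorem binExp_le_strVal_pre (A : Seq) (n : ℕ) :
    binExp A ≤ (strVal (pre A n) + 1 : ℝ) / 2 ^ n := by
  rw [binExp_eq_strVal_pre_add A n, binExp_eq_ofDigits fun i => A (i + n)]
  gcongr
  exact Real.ofDigits_le_one _

theorem strVal_pre_lt_binExp {A : Seq} {n m : ℕ} (hnm : n ≤ m) (hm : A m = true) :
    (strVal (pre A n) : ℝ) / 2 ^ n < binExp A := by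
  calc (strVal (pre A n) : ℝ) / 2 ^ n
      ≤ strVal (pre A m) / 2 ^ m := by
        simpa using strVal_div_le_of_isPrefix (pre_isPrefix A hnm)
    _ < strVal (pre A (m + 1)) / 2 ^ (m + 1) := by
        rw [strVal_pre_succ, hm, div_lt_div_iff₀ (by positivity) (by positivity), pow_succ]
        rw [Bool.toNat_true]
        push_cast
        nlinarith [show (0 : ℝ) < 2 ^ m by positivity]
    _ ≤ binExp A := strVal_pre_le_binExp A (m + 1)

theorem bit_eq_true_iff_lt_binExp {A : Seq} {n m : ℕ} (hnm : n < m) (hm : A m = true) :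
    A n = true ↔ ((2 * strVal (pre A n) + 1 : ℕ) : ℝ) / 2 ^ (n + 1) < binExp A := by
  cases hn : A n
  · have h := binExp_le_strVal_pre A (n + 1)
    rw [strVal_pre_succ, hn] at h
    simpa using h
  · have h := strVal_pre_lt_binExp hnm hm
    rw [strVal_pre_succ, hn] at h
    simpa using h

theorem computable_of_eventually_false {A : Seq} {N : ℕ} (hN : ∀ n, N ≤ n → A n = false) :
    Computable A := by
  refine (Primrec.option_getD.comp (Primrec.list_getElem?₁ (pre A N)) (.const false)).to_comp.of_eq
    fun n => ?_
  rcases lt_or_ge n N with h | h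
  · simp [pre, h]
  · simp [pre, hN n h, h]

end Strings

section RelativeRecursion

open Encodable

namespace RecIn

variable {O : ℕ →. ℕ}

theorem of_partrec (O : ℕ →. ℕ) {f : ℕ →. ℕ} (hf : Nat.Partrec f) : RecIn O f := by
  induction hf with
  | zero => exact zero
  | succ => exact succ
  | left => exact left
  | right => exact right
  | pair _ _ hf hg => exact pair hf hg
  | comp _ _ hf hg => exact comp hf hg
  | prec _ _ hf hg => exact prec hf hg
  | rfind _ hf => exact rfind hf

theorem of_computable (O : ℕ →. ℕ) {f : ℕ → ℕ} (hf : Computable f) :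
    RecIn O fun n => Part.some (f n) :=
  of_partrec O (Partrec.nat_iff.1 hf)

theorem of_eq {f g : ℕ →. ℕ} (hf : RecIn O f) (h : ∀ n, f n = g n) : RecIn O g :=
  (funext h : f = g) ▸ hf

theorem comp_some {f : ℕ →. ℕ} {g : ℕ → ℕ} (hf : RecIn O f) (hg : RecIn O fun n => .some (g n)) :
    RecIn O fun n => f (g n) :=
  (comp hf hg).of_eq fun n => Part.bind_some (g n) f

theorem pair_some {f g : ℕ → ℕ} (hf : RecIn O fun n => .some (f n))
    (hg : RecIn O fun n => .some (g n)) : RecIn O fun n => .some (Nat.pair (f n) (g n)) := by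
  simpa [Seq.seq] using pair hf hg

theorem iterate_query_nat {o v : ℕ → ℕ} {step : ℕ → ℕ → ℕ} {query : ℕ → ℕ}
    (hquery : Computable query) (hstep : Computable₂ step)
    (hsucc : ∀ n, v (n + 1) = step (v n) (o (query (v n)))) :
    RecIn (fun n => .some (o n)) fun n => .some (v n) := by
  set O : ℕ →. ℕ := fun n => .some (o n)
  have hright : RecIn O fun n : ℕ => .some n.unpair.2 := right
  have hstate : RecIn O fun n : ℕ => .some n.unpair.2.unpair.2 := hright.comp_some hright
  have hanswer : RecIn O fun n : ℕ => .some (o (query n.unpair.2.unpair.2)) :=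
    comp_some (f := O) oracle ((of_computable O hquery).comp_some hstate)
  have hstep' : Computable fun n : ℕ => step n.unpair.1 n.unpair.2 :=
    hstep.comp (Computable.fst.comp .unpair) (Computable.snd.comp .unpair)
  have hnext : RecIn O fun n : ℕ =>
      .some (step n.unpair.2.unpair.2 (o (query n.unpair.2.unpair.2))) := by
    simpa using (of_computable O hstep').comp_some (hstate.pair_some hanswer)
  have hinput : RecIn O fun n : ℕ => .some (Nat.pair 0 n) :=
    of_computable O (Primrec₂.natPair.comp (.const 0) .id).to_comp
  refine ((prec (of_computable O (.const (v 0))) hnext).comp_some hinput).of_eq fun n => ?_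
  simp only [Nat.unpaired, Nat.unpair_pair]
  induction n with
  | zero => rfl
  | succ n ih =>
    simp only [ih, hsucc]
    simp

theorem iterate_query {β : Type*} [Primcodable β] {o : ℕ → ℕ} {v : ℕ → β} {query : β → ℕ}
    {step : β → ℕ → β} (hquery : Computable query) (hstep : Computable₂ step)
    (hsucc : ∀ n, v (n + 1) = step (v n) (o (query (v n)))) :
    RecIn (fun n => .some (o n)) fun n => .some (encode (v n)) := by
  have hstate : Computable fun c : ℕ => (decode (α := β) c).getD (v 0) :=
    Computable.option_getD .decode (.const (v 0))
  refine iterate_query_nat (query := fun c => query ((decode c).getD (v 0)))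
    (step := fun c b => encode (step ((decode c).getD (v 0)) b)) (hquery.comp hstate)
    (Computable.encode.comp (hstep.comp (hstate.comp .fst) .snd)) fun n => ?_
  simp [hsucc]

end RecIn

theorem recIn_oracleOf_pre (A : Seq) : RecIn (oracleOf A) fun n => .some (encode (pre A n)) := by
  refine RecIn.iterate_query (o := fun n => cond (A n) 1 0) (query := List.length)
    (step := fun σ b => σ ++ [decide (b = 1)]) Primrec.list_length.to_comp
    (Primrec.list_append.comp .fst (Primrec.list_cons.comp
      (PrimrecPred.decide (Primrec.eq.comp .snd (.const 1))) (.const []))).to_comp fun n => ?_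
  cases h : A n <;> simp [pre_succ, h]

theorem recIn_oracleOf_of_partrec₂ (A : Seq) {f : ℕ → Str →. ℕ} (hf : Partrec₂ f) {m : ℕ → ℕ}
    (hm : Computable m) : RecIn (oracleOf A) fun n => f n (pre A (m n)) := by
  have hf' : Partrec fun c : ℕ => f c.unpair.1 ((decode c.unpair.2).getD []) :=
    hf.comp (Computable.fst.comp .unpair)
      (Computable.option_getD (Computable.decode.comp (Computable.snd.comp .unpair)) (.const []))
  refine ((RecIn.of_partrec (oracleOf A) (Partrec.nat_iff.1 hf')).comp_some
    ((RecIn.of_computable _ .id).pair_some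
      ((recIn_oracleOf_pre A).comp_some (RecIn.of_computable _ hm)))).of_eq fun n => ?_
  simp

theorem turingLE_of_recIn_pre {A : Seq} {O : ℕ →. ℕ}
    (h : RecIn O fun n => .some (encode (pre A n))) : TuringLE (oracleOf A) O := by
  have hlast : Computable fun c : ℕ => strVal ((decode c).getD []) % 2 :=
    (Primrec.nat_mod.comp (primrec_strVal.comp (Primrec.option_getD.comp .decode (.const [])))
      (.const 2)).to_comp
  refine ((RecIn.of_computable O hlast).comp_some (h.comp_some
    (RecIn.of_computable O Computable.succ))).of_eq fun n => ?_
  cases hn : A n <;> simp [strVal_pre_succ, oracleOf, hn, Nat.add_mod]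

theorem turingLE_of_computable {A : Seq} (O : ℕ →. ℕ) (hA : Computable A) :
    TuringLE (oracleOf A) O :=
  RecIn.of_computable O (hA.cond (.const 1) (.const 0))

end RelativeRecursion

section Kraft

open InformationTheory MeasureTheory

theorem PrefixFree.mono {S T : Set Str} (hT : PrefixFree T) (hST : S ⊆ T) : PrefixFree S :=
  fun σ hσ τ hτ => hT σ (hST hσ) τ (hST hτ)

theorem PrefixFree.uniquelyDecodable {S : Set Str} (hS : PrefixFree S) (hnil : [] ∉ S) :
    UniquelyDecodable S := by
  intro L₁
  induction L₁ with
  | nil =>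
    rintro (_ | ⟨τ, L₂⟩) - h₂ h
    · rfl
    · obtain rfl : τ = [] := by simp_all
      exact absurd (h₂ [] (by simp)) hnil
  | cons σ L₁ ih =>
    rintro (_ | ⟨τ, L₂⟩) h₁ h₂ h
    · obtain rfl : σ = [] := by simp_all
      exact absurd (h₁ [] (by simp)) hnil
    · rw [List.flatten_cons, List.flatten_cons] at h
      have hσ := h₁ σ (by simp)
      have hτ := h₂ τ (by simp)
      obtain rfl : σ = τ := by
        rcases List.prefix_or_prefix_of_prefix (List.prefix_append σ L₁.flatten)
          (h ▸ List.prefix_append τ L₂.flatten) with hpre | hpre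
        · exact hS σ hσ τ hτ hpre
        · exact (hS τ hτ σ hσ hpre).symm
      rw [ih L₂ (fun ρ hρ => h₁ ρ (by simp [hρ])) (fun ρ hρ => h₂ ρ (by simp [hρ]))
        (List.append_cancel_left h)]

theorem PrefixFree.sum_le_one {F : Finset Str} (hF : PrefixFree (F : Set Str)) :
    ∑ σ ∈ F, (2 : ℝ)⁻¹ ^ σ.length ≤ 1 := by
  by_cases hnil : [] ∈ F
  · have : F = {[]} :=
      Finset.eq_singleton_iff_unique_mem.2 ⟨hnil, fun σ hσ => (hF [] hnil σ hσ σ.nil_prefix).symm⟩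
    simp [this]
  · simpa using kraft_mcmillan_inequality (hF.uniquelyDecodable (by simpa using hnil))

theorem PrefixFree.summable {S : Set Str} (hS : PrefixFree S) :
    Summable fun σ : S => (2 : ℝ)⁻¹ ^ σ.1.length := by
  refine summable_of_sum_le (c := 1) (fun σ => by positivity) fun F => ?_
  have hF : PrefixFree (F.map (Function.Embedding.subtype _) : Finset Str) :=
    hS.mono (by simp +contextual [Set.subset_def])
  simpa [Finset.sum_map] using hF.sum_le_one

theorem PrefixFreeMachine.hasSum_omega {M : Str →. Str} (hM : PrefixFreeMachine M) :
    HasSum (fun q : {q : Str × Str // q.2 ∈ M q.1} => (2 : ℝ)⁻¹ ^ q.1.1.length) (Omega M) := by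
  let graphEquiv : {σ // (M σ).Dom} ≃ {q : Str × Str // q.2 ∈ M q.1} :=
    { toFun := fun σ => ⟨(σ.1, (M σ.1).get σ.2), Part.get_mem σ.2⟩
      invFun := fun q => ⟨q.1.1, Part.dom_iff_mem.2 ⟨_, q.2⟩⟩
      left_inv := fun _ => rfl
      right_inv := fun q => Subtype.ext (Prod.ext rfl (Part.get_eq_of_mem q.2 _)) }
  rw [← graphEquiv.hasSum_iff]
  have homega : Omega M = ∑' σ : {σ | (M σ).Dom}, (2 : ℝ)⁻¹ ^ σ.1.length :=
    (tsum_subtype {σ | (M σ).Dom} fun σ : Str => (2 : ℝ)⁻¹ ^ σ.length).symm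
  exact homega ▸ hM.2.summable.hasSum

theorem mem_cyl_pre (A : Seq) (n : ℕ) : A ∈ cyl (pre A n) := by
  simp [cyl]

theorem isPrefix_pre_of_mem_cyl {A : Seq} {σ : Str} (h : A ∈ cyl σ) {n : ℕ}
    (hn : σ.length ≤ n) : σ <+: pre A n := by
  have hσ : pre A σ.length = σ := h
  exact hσ ▸ pre_isPrefix A hn

theorem mem_cyl_of_isPrefix_pre {A : Seq} {σ : Str} {n : ℕ} (h : σ <+: pre A n) : A ∈ cyl σ := by
  have hn : σ.length ≤ n := by simpa using h.length_le
  exact (List.prefix_of_prefix_length_le (pre_isPrefix A hn) h (by simp)).eq_of_length (by simp)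

theorem cyl_subset_cyl {σ τ : Str} (h : σ <+: τ) : cyl τ ⊆ cyl σ := fun _ hτ =>
  mem_cyl_of_isPrefix_pre (h.trans (isPrefix_pre_of_mem_cyl hτ le_rfl))

theorem isPrefix_or_isPrefix_of_mem_cyl {A : Seq} {σ τ : Str} (hσ : A ∈ cyl σ) (hτ : A ∈ cyl τ) :
    σ <+: τ ∨ τ <+: σ :=
  List.prefix_or_prefix_of_prefix (isPrefix_pre_of_mem_cyl hσ (le_max_left _ τ.length))
    (isPrefix_pre_of_mem_cyl hτ (le_max_right σ.length _))

theorem measurableSet_cyl (σ : Str) : MeasurableSet (cyl σ) :=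
  (measurable_pi_lambda (fun (A : Seq) (i : Fin σ.length) => A i)
    fun i => measurable_pi_apply i.1) (Set.toFinite {f | List.ofFn f = σ}).measurableSet

theorem PrefixFree.tsum_le_measure {μ : Measure Seq} (hμ : FairCoin μ) {S : Set Str}
    (hS : PrefixFree S) {V : Set Seq} (hV : ∀ σ ∈ S, cyl σ ⊆ V) :
    ∑' σ : S, (2 : ℝ≥0∞)⁻¹ ^ σ.1.length ≤ μ V := by
  have hdisj : Pairwise (Function.onFun Disjoint fun σ : S => cyl σ.1) := by
    refine fun σ τ hne => Set.disjoint_left.2 fun A hσ hτ => hne (Subtype.ext ?_)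
    rcases isPrefix_or_isPrefix_of_mem_cyl hσ hτ with h | h
    · exact hS σ σ.2 τ τ.2 h
    · exact (hS τ τ.2 σ σ.2 h).symm
  calc ∑' σ : S, (2 : ℝ≥0∞)⁻¹ ^ σ.1.length = ∑' σ : S, μ (cyl σ.1) :=
        tsum_congr fun σ => (hμ σ.1).symm
    _ = μ (⋃ σ : S, cyl σ.1) := (measure_iUnion hdisj fun σ => measurableSet_cyl σ.1).symm
    _ ≤ μ V := measure_mono (Set.iUnion_subset fun σ => hV σ σ.2)

end Kraft

section Complexity

variable {U M : Str →. Str} {σ τ : Str}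

theorem cplx_le_of_mem (h : τ ∈ M σ) : Cplx M τ ≤ σ.length :=
  sInf_le ⟨σ, h, rfl⟩

theorem exists_mem_of_cplx_le {n : ℕ} (h : Cplx M τ ≤ n) : ∃ σ, τ ∈ M σ ∧ σ.length ≤ n := by
  by_contra! hlong
  have hle : ((n + 1 : ℕ) : ℕ∞) ≤ Cplx M τ := by
    refine le_sInf ?_
    rintro _ ⟨σ, hσ, rfl⟩
    exact Nat.cast_le.2 (hlong σ hσ)
  exact absurd (Nat.cast_le.1 (hle.trans h)) (Nat.not_succ_le_self n)

theorem UniversalPFMachine.exists_cplx_le_of_mem (hU : UniversalPFMachine U)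
    (hM : PrefixFreeMachine M) :
    ∃ c : ℕ, ∀ ⦃σ τ⦄, τ ∈ M σ → Cplx U τ ≤ (σ.length + c : ℕ) := by
  obtain ⟨c, hc⟩ := hU.2 M hM
  refine ⟨c, fun σ τ h => (hc τ).trans ?_⟩
  push_cast
  gcongr
  exact cplx_le_of_mem h

end Complexity

section DyadicApproximation

open Encodable Filter Topology

/-- The dyadic rationals `a s / 2 ^ s`, given by a primitive recursive sequence of numerators,
increase (weakly) to `x`. -/
structure IsDyadicApprox (a : ℕ → ℕ) (x : ℝ) : Prop where
  primrec : Primrec a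
  monotone : Monotone fun s => (a s : ℝ) / 2 ^ s
  tendsto : Tendsto (fun s => (a s : ℝ) / 2 ^ s) atTop (𝓝 x)

theorem natCast_div_two_pow_lt_iff {k l m n : ℕ} :
    (k : ℝ) / 2 ^ m < l / 2 ^ n ↔ k * 2 ^ n < l * 2 ^ m := by
  rw [div_lt_div_iff₀ (by positivity) (by positivity)]
  exact_mod_cast Iff.rfl

theorem natCast_div_two_pow_lt_add_iff {k l m n : ℕ} :
    (k : ℝ) / 2 ^ m < l / 2 ^ n + 1 / 2 ^ m ↔ k * 2 ^ n < l * 2 ^ m + 2 ^ n := by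
  rw [div_add_div _ _ (by positivity) (by positivity), ← pow_add]
  have h := @natCast_div_two_pow_lt_iff k (l * 2 ^ m + 2 ^ n) m (n + m)
  push_cast at h
  rw [mul_one, h, pow_add, ← mul_assoc, mul_lt_mul_iff_left₀ (by positivity)]

/-- The first stage at which the approximation `a s / 2 ^ s` exceeds the dyadic rational of `σ`
diminished by `2 ^ (-|σ|)`. -/
def stage (a : ℕ → ℕ) : Str →. ℕ := fun σ =>
  Nat.rfind fun s => Part.some (decide (strVal σ * 2 ^ s < a s * 2 ^ σ.length + 2 ^ s))

theorem partrec_stage {a : ℕ → ℕ} (ha : Primrec a) : Partrec (stage a) := by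
  have hs : Primrec fun p : Str × ℕ => 2 ^ p.2 := primrec_two_pow.comp .snd
  have htest : PrimrecPred fun p : Str × ℕ =>
      strVal p.1 * 2 ^ p.2 < a p.2 * 2 ^ p.1.length + 2 ^ p.2 :=
    Primrec.nat_lt.comp (Primrec.nat_mul.comp (primrec_strVal.comp .fst) hs)
      (Primrec.nat_add.comp (Primrec.nat_mul.comp (ha.comp .snd)
        (primrec_two_pow.comp (Primrec.list_length.comp .fst))) hs)
  exact Partrec.rfind (PrimrecPred.decide htest).to_comp.partrec

namespace IsDyadicApprox

variable {a : ℕ → ℕ} {x : ℝ} {A : Seq}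

theorem le (h : IsDyadicApprox a x) (s : ℕ) : (a s : ℝ) / 2 ^ s ≤ x :=
  h.monotone.ge_of_tendsto h.tendsto s

theorem exists_lt_iff (h : IsDyadicApprox a x) {y : ℝ} : (∃ s, y < a s / 2 ^ s) ↔ y < x :=
  ⟨fun ⟨s, hs⟩ => hs.trans_le (h.le s), fun hy => (h.tendsto.eventually_const_lt hy).exists⟩

-- Subtracting `2 ^ (-s)` turns the weakly increasing approximation into a strictly increasing one.
theorem leftCE (h : IsDyadicApprox a x) : LeftCE x := by
  have hcast : ∀ s, ((mkRat ((a s : ℤ) - (1 : ℕ)) (2 ^ s) : ℚ) : ℝ) = a s / 2 ^ s - (2⁻¹) ^ s :=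
    fun s => by simp [Rat.mkRat_eq_div, sub_div]
  refine ⟨fun s => mkRat ((a s : ℤ) - (1 : ℕ)) (2 ^ s), ?_, fun s t hst => ?_, ?_⟩
  · exact (primrec_mkRat.comp (primrec_natCast_sub.comp h.primrec (.const 1))
      primrec_two_pow).to_comp
  · have hle : (a s : ℝ) / 2 ^ s ≤ a t / 2 ^ t := h.monotone hst.le
    have hlt : (2 : ℝ)⁻¹ ^ t < 2⁻¹ ^ s :=
      pow_lt_pow_right_of_lt_one₀ (by norm_num) (by norm_num) hst
    rw [← Rat.cast_lt (K := ℝ), hcast, hcast]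
    linarith
  · simp only [hcast]
    simpa using h.tendsto.sub
      (tendsto_pow_atTop_nhds_zero_of_lt_one (r := (2 : ℝ)⁻¹) (by norm_num) (by norm_num))

theorem cePred_div_two_pow_lt (h : IsDyadicApprox a x) :
    CEPred fun p : ℕ × ℕ => (p.1 : ℝ) / 2 ^ p.2 < x := by
  have hlt : PrimrecRel fun (p : ℕ × ℕ) (s : ℕ) => p.1 * 2 ^ s < a s * 2 ^ p.2 :=
    Primrec.nat_lt.comp
      (Primrec.nat_mul.comp (Primrec.fst.comp .fst) (primrec_two_pow.comp .snd))
      (Primrec.nat_mul.comp (h.primrec.comp .snd) (primrec_two_pow.comp (Primrec.snd.comp .fst)))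
  refine REPred.of_eq (CEPred.exists_nat hlt) fun p => ?_
  simp only [← h.exists_lt_iff, natCast_div_two_pow_lt_iff]

/-- Unless `A` is eventually `false`, each bit is decided by one question about the left cut. -/
theorem turingLE_haltingSet (h : IsDyadicApprox a (binExp A)) :
    TuringLE (oracleOf A) (oracleOfSet haltingSet) := by
  by_cases hfin : ∃ N, ∀ n, N ≤ n → A n = false
  · exact turingLE_of_computable _ (computable_of_eventually_false hfin.choose_spec)
  push Not at hfin
  obtain ⟨f, hf, hmem⟩ := h.cePred_div_two_pow_lt.exists_mem_haltingSet_iff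
  have hbit : ∀ n, f (2 * strVal (pre A n) + 1, (pre A n).length + 1) ∈ haltingSet ↔
      A n = true := fun n => by
    obtain ⟨m, hnm, hm⟩ := hfin (n + 1)
    rw [hmem, length_pre, bit_eq_true_iff_lt_binExp hnm (by simpa using hm)]
  refine turingLE_of_recIn_pre (RecIn.iterate_query
    (o := fun n => if n ∈ haltingSet then 1 else 0)
    (query := fun σ => f (2 * strVal σ + 1, σ.length + 1))
    (step := fun σ b => σ ++ [decide (b = 1)]) ?_ ?_ fun n => ?_)
  · exact hf.comp (Primrec.pair (Primrec.succ.comp (Primrec.nat_double.comp primrec_strVal))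
      (Primrec.succ.comp .list_length)).to_comp
  · exact (Primrec.list_append.comp .fst (Primrec.list_cons.comp
      (PrimrecPred.decide (Primrec.eq.comp .snd (.const 1))) (.const []))).to_comp
  · rw [pre_succ, hbit]
    cases A n <;> simp

theorem exists_mem_stage (h : IsDyadicApprox a (binExp A)) (n : ℕ) :
    ∃ s, s ∈ stage a (pre A n) := by
  have hlt : (strVal (pre A n) : ℝ) / 2 ^ n - 1 / 2 ^ n < binExp A :=
    (sub_lt_self _ (by positivity)).trans_le (strVal_pre_le_binExp A n)
  obtain ⟨s, hs⟩ := h.exists_lt_iff.2 hlt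
  rw [sub_lt_iff_lt_add, natCast_div_two_pow_lt_add_iff] at hs
  exact Part.dom_iff_mem.1 (Nat.rfind_dom.2 ⟨s, by simpa using hs, fun _ => trivial⟩)

end IsDyadicApprox

theorem binExp_lt_of_mem_stage {a : ℕ → ℕ} {A : Seq} {n s : ℕ} (hs : s ∈ stage a (pre A n)) :
    binExp A < a s / 2 ^ s + 2 / 2 ^ n := by
  have hlt : strVal (pre A n) * 2 ^ s < a s * 2 ^ (pre A n).length + 2 ^ s := by
    simpa using Nat.rfind_spec hs
  rw [length_pre, ← natCast_div_two_pow_lt_add_iff] at hlt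
  calc binExp A ≤ (strVal (pre A n) : ℝ) / 2 ^ n + 1 / 2 ^ n := by
        rw [← add_div]
        exact binExp_le_strVal_pre A n
    _ < a s / 2 ^ s + 1 / 2 ^ n + 1 / 2 ^ n := by gcongr
    _ = a s / 2 ^ s + 2 / 2 ^ n := by ring

/-- The sum of the weights `2 ^ (-ℓ)` of the lengths `ℓ` listed by `L` before stage `s`, scaled by
`2 ^ s`. The subtraction in the exponent is exact when every length is listed no earlier than its
own value. -/
def dyadicSum (L : ℕ → Option ℕ) (s : ℕ) : ℕ :=
  ∑ k ∈ Finset.range s, (L k).elim 0 fun ℓ => 2 ^ (s - ℓ)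

theorem primrec_dyadicSum {L : ℕ → Option ℕ} (hL : Primrec L) : Primrec (dyadicSum L) := by
  refine primrec_sum_range (f := fun s k => (L k).elim 0 fun ℓ => 2 ^ (s - ℓ)) ?_ .id
  refine (Primrec.option_casesOn (hL.comp Primrec.snd) (.const 0)
    (primrec_two_pow.comp (Primrec.nat_sub.comp (Primrec.fst.comp .fst) .snd)).to₂).of_eq
    fun ⟨s, k⟩ => ?_
  dsimp only
  cases L k <;> rfl

theorem dyadicSum_div_two_pow {L : ℕ → Option ℕ} (hL : ∀ ⦃k ℓ⦄, L k = some ℓ → ℓ ≤ k) (s : ℕ) :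
    (dyadicSum L s : ℝ) / 2 ^ s = ∑ k ∈ Finset.range s, (L k).elim 0 fun ℓ => (2 : ℝ)⁻¹ ^ ℓ := by
  rw [dyadicSum, Nat.cast_sum, Finset.sum_div]
  refine Finset.sum_congr rfl fun k hk => ?_
  cases h : L k with
  | none => simp
  | some ℓ =>
    have hℓ : ℓ ≤ s := (hL h).trans (Finset.mem_range.1 hk).le
    simp [pow_sub₀ (2 : ℝ) two_ne_zero hℓ]

theorem elim_two_inv_pow_nonneg (o : Option ℕ) : 0 ≤ o.elim 0 fun ℓ => (2 : ℝ)⁻¹ ^ ℓ := by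
  cases o <;> simp

theorem monotone_dyadicSum_div_two_pow {L : ℕ → Option ℕ} (hL : ∀ ⦃k ℓ⦄, L k = some ℓ → ℓ ≤ k) :
    Monotone fun s => (dyadicSum L s : ℝ) / 2 ^ s := by
  simp only [dyadicSum_div_two_pow hL]
  exact monotone_nat_of_le_succ fun s =>
    Finset.sum_le_sum_of_subset_of_nonneg (by simp) fun _ _ _ => elim_two_inv_pow_nonneg _

theorem isDyadicApprox_dyadicSum {L : ℕ → Option ℕ} (hL : Primrec L)
    (hle : ∀ ⦃k ℓ⦄, L k = some ℓ → ℓ ≤ k) {x : ℝ}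
    (hx : HasSum (fun k => (L k).elim 0 fun ℓ => (2 : ℝ)⁻¹ ^ ℓ) x) :
    IsDyadicApprox (dyadicSum L) x where
  primrec := primrec_dyadicSum hL
  monotone := monotone_dyadicSum_div_two_pow hle
  tendsto := by
    simp only [dyadicSum_div_two_pow hle]
    exact hx.tendsto_sum_nat

end DyadicApproximation

section KraftChaitin

open Encodable

/-- The value of the string of length `ℓ + 1` which serves a request of length `ℓ` issued at stage
`k`: the least multiple of `2 ^ (-(ℓ + 1))` above the total weight of the lengths that `L` lists
before stage `k`, in units of `2 ^ (-(ℓ + 1))`. -/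
def kraftStart (L : ℕ → Option ℕ) (k ℓ : ℕ) : ℕ :=
  dyadicSum L k * 2 ^ (ℓ + 1) / 2 ^ k + 1

section Intervals

variable {L : ℕ → Option ℕ} {k ℓ : ℕ}

theorem dyadicSum_div_lt_kraftStart_div (L : ℕ → Option ℕ) (k ℓ : ℕ) :
    (dyadicSum L k : ℝ) / 2 ^ k < kraftStart L k ℓ / 2 ^ (ℓ + 1) := by
  rw [natCast_div_two_pow_lt_iff, kraftStart, add_mul, one_mul]
  exact Nat.lt_div_mul_add (by positivity)

theorem kraftStart_succ_div_le (hL : ∀ ⦃k ℓ⦄, L k = some ℓ → ℓ ≤ k) (hk : L k = some ℓ) :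
    ((kraftStart L k ℓ + 1 : ℕ) : ℝ) / 2 ^ (ℓ + 1) ≤ dyadicSum L (k + 1) / 2 ^ (k + 1) := by
  have hsucc : (dyadicSum L (k + 1) : ℝ) / 2 ^ (k + 1) =
      dyadicSum L k / 2 ^ k + 2 / 2 ^ (ℓ + 1) := by
    rw [dyadicSum_div_two_pow hL, dyadicSum_div_two_pow hL, Finset.sum_range_succ, hk,
      Option.elim_some, inv_pow, pow_succ]
    field_simp
  have hfloor : ((dyadicSum L k * 2 ^ (ℓ + 1) / 2 ^ k : ℕ) : ℝ) ≤
      dyadicSum L k / 2 ^ k * 2 ^ (ℓ + 1) := by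
    refine Nat.cast_div_le.trans (le_of_eq ?_)
    push_cast
    ring
  rw [hsucc, div_le_iff₀ (by positivity), add_mul, div_mul_cancel₀ _ (by positivity), kraftStart]
  push_cast at hfloor ⊢
  linarith

/-- Stage `k` uses only the part of the unit interval between the `k`-th and the `k + 1`-st partial
sum, so strings serving requests of distinct stages are incomparable. -/
theorem kraftStart_index_eq_of_isPrefix (hL : ∀ ⦃k ℓ⦄, L k = some ℓ → ℓ ≤ k) {k' ℓ' : ℕ}
    (hk : L k = some ℓ) (hk' : L k' = some ℓ') {ρ ρ' : Str} (hlen : ρ.length = ℓ + 1)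
    (hval : strVal ρ = kraftStart L k ℓ) (hlen' : ρ'.length = ℓ' + 1)
    (hval' : strVal ρ' = kraftStart L k' ℓ') (hpre : ρ <+: ρ') : k = k' := by
  have hleft := strVal_div_le_of_isPrefix hpre
  have hright := succ_strVal_div_le_of_isPrefix hpre
  have hnonempty : (strVal ρ' : ℝ) / 2 ^ ρ'.length < (strVal ρ' + 1 : ℕ) / 2 ^ ρ'.length := by
    gcongr
    exact Nat.lt_succ_self _
  rw [hlen, hlen', hval, hval'] at hleft hright
  rw [hlen', hval'] at hnonempty
  have hmono := monotone_dyadicSum_div_two_pow hL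
  have hstart := dyadicSum_div_lt_kraftStart_div L k ℓ
  have hstart' := dyadicSum_div_lt_kraftStart_div L k' ℓ'
  have hend := kraftStart_succ_div_le hL hk
  have hend' := kraftStart_succ_div_le hL hk'
  rcases lt_trichotomy k k' with hlt | heq | hlt
  · linarith [hmono (Nat.add_one_le_of_lt hlt)]
  · exact heq
  · linarith [hmono (Nat.add_one_le_of_lt hlt)]

theorem dyadicSum_div_two_pow_le_one (hL : ∀ ⦃k ℓ⦄, L k = some ℓ → ℓ ≤ k)
    (hsum : ∑' k, ((L k).elim 0 fun ℓ => (2 : ℝ≥0∞)⁻¹ ^ ℓ) ≤ 1) (k : ℕ) :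
    (dyadicSum L k : ℝ) / 2 ^ k ≤ 1 := by
  have hweight : ∀ o : Option ℕ, ENNReal.ofReal (o.elim 0 fun ℓ => (2 : ℝ)⁻¹ ^ ℓ) =
      o.elim 0 fun ℓ => (2 : ℝ≥0∞)⁻¹ ^ ℓ := by
    rintro (_ | ℓ) <;> simp [ENNReal.ofReal_pow, ENNReal.ofReal_inv_of_pos, ENNReal.inv_pow]
  rw [dyadicSum_div_two_pow hL, ← ENNReal.ofReal_le_one,
    ENNReal.ofReal_sum_of_nonneg fun _ _ => elim_two_inv_pow_nonneg _]
  simp only [hweight]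
  exact (ENNReal.sum_le_tsum _).trans hsum

theorem kraftStart_lt_two_pow (hL : ∀ ⦃k ℓ⦄, L k = some ℓ → ℓ ≤ k)
    (hsum : ∑' k, ((L k).elim 0 fun ℓ => (2 : ℝ≥0∞)⁻¹ ^ ℓ) ≤ 1) (hk : L k = some ℓ) :
    kraftStart L k ℓ < 2 ^ (ℓ + 1) := by
  have h := (kraftStart_succ_div_le hL hk).trans (dyadicSum_div_two_pow_le_one hL hsum (k + 1))
  rw [div_le_one (by positivity)] at h
  exact_mod_cast h

theorem primrec_kraftStart (hL : Primrec L) : Primrec₂ (kraftStart L) :=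
  Primrec.succ.comp (Primrec.nat_div.comp
    (Primrec.nat_mul.comp ((primrec_dyadicSum hL).comp .fst)
      (primrec_two_pow.comp (Primrec.succ.comp .snd)))
    (primrec_two_pow.comp .fst))

end Intervals

section Machine

/-- The lengths asked for by a list of requests `(ℓ, τ)`. -/
def requestLength (r : ℕ → Option (ℕ × Str)) (k : ℕ) : Option ℕ := (r k).map Prod.fst

/-- The output which `ρ` receives if it serves the request issued at stage `k`. -/
def serve (r : ℕ → Option (ℕ × Str)) (ρ : Str) (k : ℕ) : Option Str :=
  (r k).bind fun q =>
    if ρ.length = q.1 + 1 ∧ strVal ρ = kraftStart (requestLength r) k q.1 then some q.2 else none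

/-- The Kraft–Chaitin machine: it serves each request `(ℓ, τ)` of the list `r` by describing `τ`
with a string of length `ℓ + 1`. -/
def kraftMachine (r : ℕ → Option (ℕ × Str)) : Str →. Str := fun ρ => Nat.rfindOpt (serve r ρ)

variable {r : ℕ → Option (ℕ × Str)} {R : ℕ × Str → Prop}

theorem serve_eq_some_iff {ρ τ : Str} {k : ℕ} : serve r ρ k = some τ ↔
    ∃ ℓ, r k = some (ℓ, τ) ∧ ρ.length = ℓ + 1 ∧
      strVal ρ = kraftStart (requestLength r) k ℓ := by
  simp only [serve, Option.bind_eq_some_iff, Option.ite_none_right_eq_some, Prod.exists,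
    Option.some_inj]
  constructor
  · rintro ⟨ℓ, _, hk, h, rfl⟩
    exact ⟨ℓ, hk, h⟩
  · rintro ⟨ℓ, hk, h⟩
    exact ⟨ℓ, τ, hk, h, rfl⟩

theorem primrec_requestLength (hr : Primrec r) : Primrec (requestLength r) :=
  Primrec.option_map hr (Primrec.fst.comp .snd).to₂

theorem partrec_kraftMachine (hr : Primrec r) : Partrec (kraftMachine r) := by
  have hstart : Primrec fun p : (Str × ℕ) × ℕ × Str =>
      kraftStart (requestLength r) p.1.2 p.2.1 :=
    (primrec_kraftStart (primrec_requestLength hr)).comp (Primrec.snd.comp .fst)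
      (Primrec.fst.comp .snd)
  have hρ : Primrec fun p : (Str × ℕ) × ℕ × Str => p.1.1 := Primrec.fst.comp .fst
  refine Partrec.rfindOpt (Primrec.option_bind (hr.comp .snd) (Primrec.ite
    ((Primrec.eq.comp (Primrec.list_length.comp hρ)
      (Primrec.succ.comp (Primrec.fst.comp .snd))).and
      (Primrec.eq.comp (primrec_strVal.comp hρ) hstart))
    (Primrec.option_some.comp (Primrec.snd.comp .snd)) (.const none)).to₂).to_comp

theorem IsEnumeration.requestLength_le (hr : IsEnumeration r R) ⦃k ℓ : ℕ⦄
    (h : requestLength r k = some ℓ) : ℓ ≤ k := by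
  obtain ⟨⟨ℓ, τ⟩, hk, rfl⟩ := Option.map_eq_some_iff.1 h
  exact (Nat.left_le_pair ℓ (encode τ)).trans (hr.encode_le hk)

theorem IsEnumeration.serve_index_eq (hr : IsEnumeration r R) {ρ ρ' τ τ' : Str} {k k' : ℕ}
    (h : serve r ρ k = some τ) (h' : serve r ρ' k' = some τ') (hpre : ρ <+: ρ') : k = k' := by
  obtain ⟨ℓ, hk, hlen, hval⟩ := serve_eq_some_iff.1 h
  obtain ⟨ℓ', hk', hlen', hval'⟩ := serve_eq_some_iff.1 h'
  exact kraftStart_index_eq_of_isPrefix hr.requestLength_le (by simp [requestLength, hk])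
    (by simp [requestLength, hk']) hlen hval hlen' hval' hpre

theorem IsEnumeration.prefixFreeMachine_kraftMachine (hr : IsEnumeration r R) :
    PrefixFreeMachine (kraftMachine r) := by
  refine ⟨partrec_kraftMachine hr.primrec, fun ρ hρ ρ' hρ' hpre => ?_⟩
  obtain ⟨k, hk⟩ := Nat.rfindOpt_spec (Part.get_mem hρ)
  obtain ⟨k', hk'⟩ := Nat.rfindOpt_spec (Part.get_mem hρ')
  obtain rfl := hr.serve_index_eq hk hk' hpre
  obtain ⟨ℓ, hr, hlen, -⟩ := serve_eq_some_iff.1 hk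
  obtain ⟨ℓ', hr', hlen', -⟩ := serve_eq_some_iff.1 hk'
  obtain ⟨rfl, -⟩ : ℓ = ℓ' ∧ _ := by simpa [hr] using hr'
  exact hpre.eq_of_length (hlen.trans hlen'.symm)

theorem IsEnumeration.exists_mem_kraftMachine (hr : IsEnumeration r R)
    (hsum : ∑' q : {q // R q}, (2 : ℝ≥0∞)⁻¹ ^ q.1.1 ≤ 1) {ℓ : ℕ} {τ : Str} (h : R (ℓ, τ)) :
    ∃ ρ, τ ∈ kraftMachine r ρ ∧ ρ.length = ℓ + 1 := by
  obtain ⟨k, hk⟩ := (hr.exists_eq_some_iff _).2 h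
  have hsum' : ∑' k, ((requestLength r k).elim 0 fun ℓ => (2 : ℝ≥0∞)⁻¹ ^ ℓ) ≤ 1 := by
    rw [← hr.tsum_eq fun q : ℕ × Str => (2 : ℝ≥0∞)⁻¹ ^ q.1] at hsum
    simpa only [requestLength, Option.elim_map, Function.comp_def] using hsum
  obtain ⟨ρ, hlen, hval⟩ := exists_strVal_eq _ _
    (kraftStart_lt_two_pow hr.requestLength_le hsum' (k := k) (ℓ := ℓ)
      (by simp [requestLength, hk]))
  have hserve : serve r ρ k = some τ := serve_eq_some_iff.2 ⟨ℓ, hk, hlen, hval⟩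
  have hdom : (kraftMachine r ρ).Dom := Nat.rfindOpt_dom.2 ⟨k, τ, hserve⟩
  obtain ⟨k', hk'⟩ := Nat.rfindOpt_spec (Part.get_mem hdom)
  obtain rfl := hr.serve_index_eq hserve hk' (List.prefix_refl ρ)
  exact ⟨ρ, Option.some.inj (hserve.symm.trans hk') ▸ Part.get_mem hdom, hlen⟩

end Machine

theorem UniversalPFMachine.exists_cplx_le_of_requests {U : Str →. Str} (hU : UniversalPFMachine U)
    {R : ℕ × Str → Prop} (hR : CEPred R)
    (hsum : ∑' q : {q // R q}, (2 : ℝ≥0∞)⁻¹ ^ q.1.1 ≤ 1) :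
    ∃ c : ℕ, ∀ ⦃ℓ τ⦄, R (ℓ, τ) → Cplx U τ ≤ (ℓ + c : ℕ) := by
  obtain ⟨r, hr⟩ := hR.exists_isEnumeration
  obtain ⟨c, hc⟩ := hU.exists_cplx_le_of_mem hr.prefixFreeMachine_kraftMachine
  refine ⟨1 + c, fun ℓ τ h => ?_⟩
  obtain ⟨ρ, hρ, hlen⟩ := hr.exists_mem_kraftMachine hsum h
  exact (hc hρ).trans (by rw [hlen, add_assoc])

end KraftChaitin

section HaltingProbability

open Encodable

variable {M U : Str →. Str} {A : Seq}

/-- If the pair `(σ, τ)` is enumerated after stage `s` then `2 ^ (-|σ|)` is missing from the `s`-th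
approximation; otherwise its code, and hence `|τ|`, is smaller than `s`. -/
theorem PrefixFreeMachine.exists_isDyadicApprox_omega (hM : PrefixFreeMachine M) :
    ∃ a, IsDyadicApprox a (Omega M) ∧ ∀ ⦃s σ τ⦄, τ ∈ M σ →
      Omega M < a s / 2 ^ s + 2⁻¹ ^ σ.length → τ.length < s := by
  obtain ⟨w, hw⟩ := (CEPred.mem_graph hM.1).exists_isEnumeration
  let L : ℕ → Option ℕ := fun k => (w k).map fun q => q.1.length
  have hL : Primrec L := Primrec.option_map hw.primrec (Primrec.list_length.comp
    (Primrec.fst.comp .snd)).to₂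
  have hle : ∀ ⦃k ℓ⦄, L k = some ℓ → ℓ ≤ k := fun k ℓ h => by
    obtain ⟨⟨σ, τ⟩, hk, rfl⟩ := Option.map_eq_some_iff.1 h
    exact (length_le_encode σ).trans ((Nat.left_le_pair _ (encode τ)).trans (hw.encode_le hk))
  have hsum : HasSum (fun k => (L k).elim 0 fun ℓ => (2 : ℝ)⁻¹ ^ ℓ) (Omega M) := by
    simpa only [L, Option.elim_map, Function.comp_def] using
      (hw.hasSum_iff (g := fun q => (2 : ℝ)⁻¹ ^ q.1.length)).2 hM.hasSum_omega
  have happrox := isDyadicApprox_dyadicSum hL hle hsum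
  refine ⟨dyadicSum L, happrox, fun s σ τ hτ hlt => ?_⟩
  obtain ⟨k, hk⟩ := (hw.exists_eq_some_iff (σ, τ)).2 hτ
  have hks : k < s := by
    by_contra! hsk
    have hmono : (dyadicSum L s : ℝ) / 2 ^ s ≤ dyadicSum L k / 2 ^ k := happrox.monotone hsk
    have hsucc := happrox.le (k + 1)
    rw [dyadicSum_div_two_pow hle, Finset.sum_range_succ, ← dyadicSum_div_two_pow hle] at hsucc
    simp only [L, hk, Option.map_some, Option.elim_some] at hsucc
    linarith
  calc τ.length ≤ encode τ := length_le_encode τ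
    _ ≤ Nat.pair (encode σ) (encode τ) := Nat.right_le_pair _ _
    _ ≤ k := hw.encode_le hk
    _ < s := hks

theorem PrefixFreeMachine.exists_output_length_bound (hM : PrefixFreeMachine M) :
    ∃ g : Str →. ℕ, Partrec g ∧ ∀ A, binExp A = Omega M → ∀ n, ∃ b ∈ g (pre A n),
      ∀ ⦃σ τ⦄, τ ∈ M σ → σ.length < n → τ.length < b := by
  obtain ⟨a, ha, hbound⟩ := hM.exists_isDyadicApprox_omega
  refine ⟨stage a, partrec_stage ha.primrec, fun A hA n => ?_⟩
  obtain ⟨s, hs⟩ := IsDyadicApprox.exists_mem_stage (hA ▸ ha) n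
  refine ⟨s, hs, fun σ τ hτ hσ => hbound hτ ?_⟩
  calc Omega M < a s / 2 ^ s + 2 / 2 ^ n := hA ▸ binExp_lt_of_mem_stage hs
    _ ≤ a s / 2 ^ s + 2 / 2 ^ (σ.length + 1) := by gcongr <;> simp [Nat.succ_le_of_lt hσ]
    _ = a s / 2 ^ s + 2⁻¹ ^ σ.length := by
      rw [pow_succ, inv_pow]
      field_simp

theorem tsum_two_inv_pow_add_one : ∑' n : ℕ, (2 : ℝ≥0∞)⁻¹ ^ (n + 1) = 1 := by
  rw [ENNReal.tsum_geometric_add_one, ENNReal.one_sub_inv_two, inv_inv]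
  exact ENNReal.inv_mul_cancel two_ne_zero ENNReal.ofNat_ne_top

theorem UniversalPFMachine.exists_cplx_le_of_partrec (hU : UniversalPFMachine U) {f : ℕ →. Str}
    (hf : Partrec f) : ∃ c : ℕ, ∀ ⦃n τ⦄, τ ∈ f n → Cplx U τ ≤ (n + c : ℕ) := by
  let shifted : ℕ →. Str := fun ℓ => (Nat.ppred ℓ : Part ℕ).bind f
  have hshifted : Partrec shifted :=
    Partrec.bind (Partrec.nat_iff.2 Nat.Partrec.ppred) (hf.comp Computable.snd).to₂
  have hmem : ∀ {ℓ τ}, τ ∈ shifted ℓ ↔ ∃ n, n + 1 = ℓ ∧ τ ∈ f n := fun {ℓ τ} => by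
    refine (Part.mem_bind_iff (f := (Nat.ppred ℓ : Part ℕ)) (g := f)).trans ?_
    simp only [Part.mem_coe, Option.mem_def, Nat.ppred_eq_some, Nat.succ_eq_add_one]
  obtain ⟨c, hc⟩ := hU.exists_cplx_le_of_requests (CEPred.mem_graph hshifted) (by
    choose index hindex hf using fun q : {q : ℕ × Str // q.2 ∈ shifted q.1} => hmem.1 q.2
    have hinj : Function.Injective index := fun q q' h =>
      Subtype.ext (Prod.ext ((hindex q).symm.trans (h ▸ hindex q'))
        (Part.mem_unique (hf q) (h ▸ hf q')))
    simp only [← hindex]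
    exact (ENNReal.tsum_comp_le_tsum_of_injective hinj fun n => 2⁻¹ ^ (n + 1)).trans
      tsum_two_inv_pow_add_one.le)
  refine ⟨1 + c, fun n τ hτ => ?_⟩
  rw [← add_assoc]
  exact hc (hmem.2 ⟨n, rfl, hτ⟩)

theorem UniversalPFMachine.exists_cplx_replicate_index_le (hU : UniversalPFMachine U)
    {w : ℕ → Option ℕ} {p : ℕ → Prop} (hw : IsEnumeration w p) :
    ∃ c : ℕ, ∀ ⦃n k⦄, w k = some n → Cplx U (List.replicate k false) ≤ (n + c : ℕ) := by
  have hindex : Partrec fun n => Nat.rfind fun k => Part.some (decide (w k = some n)) :=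
    Partrec.rfind (PrimrecPred.decide (Primrec.eq.comp (hw.primrec.comp .snd)
      (Primrec.option_some.comp .fst))).to_comp.partrec
  obtain ⟨c, hc⟩ := hU.exists_cplx_le_of_partrec
    (hindex.map ((primrec_replicate false).comp .snd).to_comp.to₂)
  refine ⟨c, fun n k hk => hc (Part.mem_map _ (Nat.mem_rfind.2 ⟨by simp [hk], fun {j} hj => ?_⟩))⟩
  have hne : w j ≠ some n := fun h => hj.ne (hw.index_unique h hk)
  simp [hne]

/-- A number is enumerated before a stage computed from sufficiently many bits, or not at all. -/
theorem UniversalPFMachine.turingLE_of_cePred (hU : UniversalPFMachine U)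
    (hA : binExp A = Omega U) {S : Set ℕ} (hS : CEPred (· ∈ S)) :
    TuringLE (oracleOfSet S) (oracleOf A) := by
  obtain ⟨w, hw⟩ := hS.exists_isEnumeration
  obtain ⟨c, hc⟩ := hU.exists_cplx_replicate_index_le hw
  obtain ⟨g, hg, hbound⟩ := hU.1.exists_output_length_bound
  have henum : PrimrecRel fun n b => ∃ k < b, w k = some n :=
    (PrimrecRel.exists_lt (R := fun k n => w k = some n) (Primrec.eq.comp
      (hw.primrec.comp .fst) (Primrec.option_some.comp .snd))).comp .snd .fst
  have hdecide : Partrec₂ fun n σ => (g σ).map fun b => if ∃ k < b, w k = some n then 1 else 0 :=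
    (hg.comp Computable.snd).map (Primrec.ite (henum.comp (Primrec.fst.comp .fst) .snd)
      (.const 1) (.const 0)).to_comp.to₂
  have hm : Computable fun n => n + c + 1 :=
    (Primrec.succ.comp (Primrec.nat_add.comp .id (.const c))).to_comp
  refine (recIn_oracleOf_of_partrec₂ A hdecide hm).of_eq fun n => ?_
  obtain ⟨b, hb, hlt⟩ := hbound A hA (n + c + 1)
  have hmem : (∃ k < b, w k = some n) ↔ n ∈ S := by
    refine ⟨fun ⟨k, _, hk⟩ => hw.holds hk, fun hn => ?_⟩
    obtain ⟨k, hk⟩ := (hw.exists_eq_some_iff n).2 hn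
    obtain ⟨σ, hσ, hlen⟩ := exists_mem_of_cplx_le (hc hk)
    exact ⟨k, by simpa using hlt hσ (Nat.lt_succ_of_le hlen), hk⟩
  rw [Part.eq_some_iff.2 hb, Part.map_some]
  simp only [hmem]
  rfl

theorem cePred_mem_haltingSet : CEPred (· ∈ haltingSet) :=
  Partrec.dom_re (Nat.Partrec.Code.eval_part.comp (Primrec.ofNat _).to_comp .id)

end HaltingProbability

section Randomness

open Encodable MeasureTheory

variable {w : ℕ → Option (ℕ × Str)} {W : ℕ × Str → Prop}

/-- At stage `j` the enumeration `w` yields a prefix of `ν` for the component with index `i`, where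
`q = (i, ν)`. -/
def CoveredAt (w : ℕ → Option (ℕ × Str)) (j : ℕ) (q : ℕ × Str) : Prop :=
  ∃ σ, w j = some (q.1, σ) ∧ σ <+: q.2

/-- The stage `|ν|` is the first one at which a prefix of `ν` is enumerated into the component with
index `i`, where `q = (i, ν)`. Replacing each `σ` by such extensions `ν` turns an enumeration of
open sets into a primitive recursive one by prefix-free sets. -/
def FirstCovered (w : ℕ → Option (ℕ × Str)) (q : ℕ × Str) : Prop :=
  CoveredAt w q.2.length q ∧ ∀ j < q.2.length, ¬ CoveredAt w j q

theorem primrec_coveredAt (hw : Primrec w) : PrimrecRel (CoveredAt w) := by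
  have htake : PrimrecRel fun (m : ℕ) (p : ℕ × ℕ × Str) => w p.1 = some (p.2.1, p.2.2.take m) :=
    Primrec.eq.comp (hw.comp (Primrec.fst.comp .snd)) (Primrec.option_some.comp
      (Primrec.pair (Primrec.fst.comp (Primrec.snd.comp .snd))
        (Primrec.list_take.comp .fst (Primrec.snd.comp (Primrec.snd.comp .snd)))))
  refine (htake.exists_mem_list.comp (f := fun p : ℕ × ℕ × Str => List.range (p.2.2.length + 1))
    (Primrec.list_range.comp (Primrec.succ.comp (Primrec.list_length.comp (Primrec.snd.comp .snd))))
    .id).of_eq fun ⟨j, i, ν⟩ => ?_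
  simp only [List.mem_range, id]
  constructor
  · exact fun ⟨m, _, hm⟩ => ⟨_, hm, ν.take_prefix m⟩
  · rintro ⟨σ, hσ, hpre⟩
    refine ⟨σ.length, Nat.lt_succ_of_le hpre.length_le, ?_⟩
    rwa [← List.prefix_iff_eq_take.1 hpre]

theorem primrec_firstCovered (hw : Primrec w) : PrimrecPred (FirstCovered w) := by
  have hlen : Primrec fun q : ℕ × Str => q.2.length := Primrec.list_length.comp .snd
  have hcov := primrec_coveredAt hw
  have hall : PrimrecPred fun q : ℕ × Str => ∀ j < q.2.length, ¬ CoveredAt w j q :=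
    (hcov.not.forall_mem_list.comp (Primrec.list_range.comp hlen) .id).of_eq fun q => by simp
  exact (hcov.comp hlen .id).and hall

theorem prefixFree_firstCovered (w : ℕ → Option (ℕ × Str)) (i : ℕ) :
    PrefixFree {ν | FirstCovered w (i, ν)} := by
  refine fun ν h ν' h' hpre => hpre.eq_of_length_le (not_lt.1 fun hlt => h'.2 _ hlt ?_)
  obtain ⟨σ, hσ, hσν⟩ := h.1
  exact ⟨σ, hσ, hσν.trans hpre⟩

theorem IsEnumeration.iUnion_cyl_firstCovered (hw : IsEnumeration w W) (i : ℕ) :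
    ⋃ ν ∈ {ν | FirstCovered w (i, ν)}, cyl ν = ⋃ σ ∈ {σ | W (i, σ)}, cyl σ := by
  refine Set.Subset.antisymm (Set.iUnion₂_subset fun ν hν => ?_) fun A hA => ?_
  · obtain ⟨σ, hσ, hpre⟩ := hν.1
    exact (cyl_subset_cyl hpre).trans (Set.subset_biUnion_of_mem (u := cyl) (hw.holds hσ))
  · have hex : ∃ k σ, w k = some (i, σ) ∧ A ∈ cyl σ := by
      obtain ⟨σ, hσ, hAσ⟩ := Set.mem_iUnion₂.1 hA
      obtain ⟨k, hk⟩ := (hw.exists_eq_some_iff _).2 hσ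
      exact ⟨k, σ, hk, hAσ⟩
    refine Set.mem_biUnion (x := pre A (Nat.find hex)) ?_ (mem_cyl_pre A _)
    obtain ⟨σ, hσ, hAσ⟩ := Nat.find_spec hex
    have hlen : σ.length ≤ Nat.find hex :=
      (length_le_encode σ).trans ((Nat.right_le_pair i _).trans (hw.encode_le hσ))
    refine ⟨⟨σ, by simpa using hσ, isPrefix_pre_of_mem_cyl hAσ hlen⟩, ?_⟩
    rintro j hj ⟨σ', hσ', hpre⟩
    exact Nat.find_min hex (by simpa using hj) ⟨σ', hσ', mem_cyl_of_isPrefix_pre hpre⟩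

theorem two_inv_pow_sub {m n : ℕ} (h : m ≤ n) :
    (2 : ℝ≥0∞)⁻¹ ^ (n - m) = 2 ^ m * 2⁻¹ ^ n := by
  conv_rhs => rw [← Nat.sub_add_cancel h, pow_add, mul_left_comm, ← mul_pow]
  rw [ENNReal.mul_inv_cancel two_ne_zero ENNReal.ofNat_ne_top, one_pow, mul_one]

theorem tsum_two_inv_pow_length_sub_le_one {F : ℕ × Str → Prop}
    (hle : ∀ ⦃i ν⦄, F (i, ν) → i ≤ ν.length)
    (hsum : ∀ i, ∑' ν : {ν // F (i, ν)}, (2 : ℝ≥0∞)⁻¹ ^ ν.1.length ≤ 2⁻¹ ^ (2 * i + 1)) :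
    ∑' q : {q : ℕ × Str // ∃ i, F (i, q.2) ∧ q.1 + i = q.2.length}, (2 : ℝ≥0∞)⁻¹ ^ q.1.1 ≤ 1 := by
  let request : (Σ i, {ν // F (i, ν)}) → {q : ℕ × Str // ∃ i, F (i, q.2) ∧ q.1 + i = q.2.length} :=
    fun p => ⟨(p.2.1.length - p.1, p.2.1), p.1, p.2.2, Nat.sub_add_cancel (hle p.2.2)⟩
  have hrequest : Function.Surjective request := by
    rintro ⟨⟨ℓ, ν⟩, i, hν, hlen : ℓ + i = ν.length⟩
    exact ⟨⟨i, ν, hν⟩, Subtype.ext (Prod.ext (Nat.sub_eq_of_eq_add hlen.symm) rfl)⟩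
  calc _ ≤ ∑' p : Σ i, {ν // F (i, ν)}, (2 : ℝ≥0∞)⁻¹ ^ (request p).1.1 :=
        ENNReal.tsum_le_tsum_comp_of_surjective hrequest fun q => (2 : ℝ≥0∞)⁻¹ ^ q.1.1
    _ = ∑' i, 2 ^ i * ∑' ν : {ν // F (i, ν)}, (2 : ℝ≥0∞)⁻¹ ^ ν.1.length := by
        simp only [ENNReal.tsum_sigma', ← ENNReal.tsum_mul_left, request]
        exact tsum_congr fun i => tsum_congr fun ν => two_inv_pow_sub (hle ν.2)
    _ ≤ ∑' i : ℕ, 2 ^ i * (2 : ℝ≥0∞)⁻¹ ^ (2 * i + 1) := by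
        gcongr with i
        exact hsum i
    _ = ∑' i : ℕ, (2 : ℝ≥0∞)⁻¹ ^ (i + 1) :=
        tsum_congr fun i => by
          rw [← two_inv_pow_sub (by omega), show 2 * i + 1 - i = i + 1 by omega]
    _ = 1 := tsum_two_inv_pow_add_one

theorem UniversalPFMachine.exists_cplx_add_le_of_tsum_le {U : Str →. Str}
    (hU : UniversalPFMachine U) {F : ℕ × Str → Prop} (hF : PrimrecPred F)
    (hsum : ∀ i, ∑' ν : {ν // F (i, ν)}, (2 : ℝ≥0∞)⁻¹ ^ ν.1.length ≤ 2⁻¹ ^ (2 * i + 1)) :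
    ∃ c : ℕ, ∀ ⦃i ν⦄, F (i, ν) → Cplx U ν + i ≤ (ν.length + c : ℕ) := by
  have hle : ∀ ⦃i ν⦄, F (i, ν) → i ≤ ν.length := fun i ν h => by
    have hν := (ENNReal.le_tsum (⟨ν, h⟩ : {ν // F (i, ν)})).trans (hsum i)
    rw [← ENNReal.inv_pow, ← ENNReal.inv_pow, ENNReal.inv_le_inv] at hν
    have hlen : 2 * i + 1 ≤ ν.length :=
      (Nat.pow_le_pow_iff_right one_lt_two).1 (by exact_mod_cast hν)
    omega
  have hR : CEPred fun q : ℕ × Str => ∃ i, F (i, q.2) ∧ q.1 + i = q.2.length :=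
    CEPred.exists_nat ((hF.comp (Primrec.pair .snd (Primrec.snd.comp .fst))).and
      (Primrec.eq.comp (Primrec.nat_add.comp (Primrec.fst.comp .fst) .snd)
        (Primrec.list_length.comp (Primrec.snd.comp .fst))))
  obtain ⟨c, hc⟩ := hU.exists_cplx_le_of_requests hR (tsum_two_inv_pow_length_sub_le_one hle hsum)
  refine ⟨c, fun i ν h => ?_⟩
  have hν := hc (ℓ := ν.length - i) (τ := ν) ⟨i, h, Nat.sub_add_cancel (hle h)⟩
  calc Cplx U ν + i ≤ (ν.length - i + c : ℕ) + i := by gcongr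
    _ = (ν.length + c : ℕ) := by
      rw [← Nat.cast_add, add_right_comm, Nat.sub_add_cancel (hle h)]

theorem UniversalPFMachine.exists_cplx_add_le_of_mlTest {μ : Measure Seq} (hμ : FairCoin μ)
    {U : Str →. Str} (hU : UniversalPFMachine U) {V : ℕ → Set Seq} (hV : MLTest μ V) :
    ∃ c : ℕ, ∀ A ∈ ⋂ i, V i, ∀ i : ℕ, ∃ n : ℕ, Cplx U (pre A n) + i ≤ (n + c : ℕ) := by
  obtain ⟨W, hW, hVW, hμV⟩ := hV
  have hodd : CEPred fun q : ℕ × Str => (2 * q.1 + 1, q.2) ∈ W :=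
    hW.comp (Primrec.pair (Primrec.succ.comp (Primrec.nat_double.comp .fst)) .snd).to_comp
  obtain ⟨w, hw⟩ := hodd.exists_isEnumeration
  have hcover : ∀ i, ⋃ ν ∈ {ν | FirstCovered w (i, ν)}, cyl ν = V (2 * i + 1) := fun i =>
    (hw.iUnion_cyl_firstCovered i).trans (hVW (2 * i + 1)).symm
  obtain ⟨c, hc⟩ := hU.exists_cplx_add_le_of_tsum_le (primrec_firstCovered hw.primrec) fun i =>
    ((prefixFree_firstCovered w i).tsum_le_measure hμ fun ν hν =>
      (Set.subset_biUnion_of_mem (u := cyl) hν).trans (hcover i).subset).trans (hμV _)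
  refine ⟨c, fun A hA i => ?_⟩
  obtain ⟨ν, hν, hAν⟩ := Set.mem_iUnion₂.1 ((hcover i).symm.subset (Set.mem_iInter.1 hA _))
  have hpre : pre A ν.length = ν := hAν
  exact ⟨ν.length, hpre.symm ▸ hc hν⟩

theorem UniversalPFMachine.mlRandom_of_le_cplx_pre {μ : Measure Seq} (hμ : FairCoin μ)
    {U : Str →. Str} (hU : UniversalPFMachine U) {A : Seq} {d : ℕ}
    (h : ∀ n : ℕ, (n : ℕ∞) ≤ Cplx U (pre A n) + d) : MLRandom μ A := by
  intro V hV hA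
  obtain ⟨c, hc⟩ := hU.exists_cplx_add_le_of_mlTest hμ hV
  obtain ⟨n, hn⟩ := hc A hA (c + d + 1)
  have hle : ((n + (c + d + 1) : ℕ) : ℕ∞) ≤ (n + (c + d) : ℕ) := by
    calc ((n + (c + d + 1) : ℕ) : ℕ∞) = n + (c + d + 1 : ℕ) := by norm_cast
      _ ≤ Cplx U (pre A n) + d + (c + d + 1 : ℕ) := by gcongr; exact h n
      _ = Cplx U (pre A n) + (c + d + 1 : ℕ) + d := add_right_comm _ _ _
      _ ≤ (n + c : ℕ) + d := by gcongr
      _ = (n + (c + d) : ℕ) := by norm_cast; omega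
  have := Nat.cast_le.1 hle
  omega

/-- A short description of the first `n` bits would yield a short description of a string longer
than every output on inputs shorter than `n`. -/
theorem UniversalPFMachine.exists_le_cplx_pre_omega {U : Str →. Str} (hU : UniversalPFMachine U) :
    ∃ d : ℕ, ∀ A, binExp A = Omega U → ∀ n : ℕ, (n : ℕ∞) ≤ Cplx U (pre A n) + d := by
  obtain ⟨g, hg, hbound⟩ := hU.1.exists_output_length_bound
  let M : Str →. Str := fun ρ => (U ρ).bind fun σ => (g σ).map (List.replicate · false)
  have hM : PrefixFreeMachine M :=
    ⟨Partrec.bind hU.1.1 ((hg.comp Computable.snd).map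
      ((primrec_replicate false).comp .snd).to_comp.to₂).to₂, hU.1.2.mono fun ρ hρ => hρ.1⟩
  obtain ⟨d, hd⟩ := hU.exists_cplx_le_of_mem hM
  refine ⟨d, fun A hA n => ?_⟩
  by_contra! hlt
  obtain ⟨b, hb, hlong⟩ := hbound A hA n
  obtain ⟨m, hm⟩ : ∃ m : ℕ, m = Cplx U (pre A n) :=
    ENat.ne_top_iff_exists.1 (lt_of_le_of_lt le_self_add hlt).ne_top
  obtain ⟨ρ, hρ, hlen⟩ := exists_mem_of_cplx_le hm.ge
  obtain ⟨ρ', hρ', hlen'⟩ := exists_mem_of_cplx_le (hd (Part.mem_bind hρ (Part.mem_map _ hb)))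
  have hshort : ρ'.length < n := by
    rw [← hm] at hlt
    norm_cast at hlt
    omega
  simpa using hlong hρ' hshort

end Randomness

/-- **Chaitin's theorem on `Ω`**: for a universal prefix-free machine `U`, the halting
probability `Ω_U` is left-c.e., its binary expansion is Martin-Löf random, and it is
Turing equivalent to the halting problem `∅'`. -/
theorem chaitin_omega (μ : MeasureTheory.Measure Seq) (hμ : FairCoin μ)
    (U : Str →. Str) (hU : UniversalPFMachine U) :
    LeftCE (Omega U) ∧
      (∀ A : Seq, binExp A = Omega U → MLRandom μ A) ∧
      (∀ A : Seq, binExp A = Omega U →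
        TuringLE (oracleOf A) (oracleOfSet haltingSet) ∧
          TuringLE (oracleOfSet haltingSet) (oracleOf A)) := by
  obtain ⟨a, ha, -⟩ := hU.1.exists_isDyadicApprox_omega
  obtain ⟨d, hd⟩ := hU.exists_le_cplx_pre_omega
  refine ⟨ha.leftCE, fun A hA => ?random, fun A hA => ⟨?le_halting, ?halting_le⟩⟩
  case random => exact hU.mlRandom_of_le_cplx_pre hμ (hd A hA)
  case le_halting => exact IsDyadicApprox.turingLE_haltingSet (hA ▸ ha)
  case halting_le => exact hU.turingLE_of_cePred hA cePred_mem_haltingSet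

end AR
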